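/- (Stability.) Let c > 0 and let (A_n) and (B_n) be sequences of operators in V_{(0,b]}(X) whose constants satisfy M_{A_n} ≤ c and M_{B_n} ≤ c for all n. If ‖A_n − B_n‖ → 0 as n → ∞, then ‖f(A_n) − f(B_n)‖ → 0 as n → ∞. -/

import Mathlib

open MeasureTheory Set Filter

/-- A bounded operator `A` belongs to `V_{(0,b]}(X)` with constant `M` if every `t ∈ (0,b]`
lies in the resolvent set of `A` and `‖R(t,A)‖ ≤ M/t`. -/
def MemV {X : Type*} [NormedAddCommGroup X] [NormedSpace ℂ X]
    (b M : ℝ) (A : X →L[ℂ] X) : Prop :=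
  ∀ t ∈ Ioc (0 : ℝ) b, (t : ℂ) ∈ resolventSet ℂ A ∧ ‖resolvent A (t : ℂ)‖ ≤ M / t

/-- For `f ∈ ZR(0,b]` with representing measure `τ`, the operator
`f(A) = ∫₀^b A·R(t,A) dτ(t)` (a Bochner integral in operator norm). -/
noncomputable def fOp {X : Type*} [NormedAddCommGroup X] [NormedSpace ℂ X] [CompleteSpace X]
    (τ : Measure ℝ) (b : ℝ) (A : X →L[ℂ] X) : X →L[ℂ] X :=
  ∫ t in Ioc (0 : ℝ) b, A * resolvent A (t : ℂ) ∂τ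

/-!
Since `A R(t, A) = t R(t, A) - I`, the second resolvent identity gives
`A R(t, A) - B R(t, B) = t R(t, A) (A - B) R(t, B)`, whose norm is at most `M N ‖A - B‖ / t` when
`A` and `B` belong to `V_{(0,b]}(X)` with constants `M` and `N`. As `1 / t` is `τ`-integrable, `f`
is Lipschitz on every set of operators sharing a constant.
-/

section Resolvent

variable {R S : Type*} [CommSemiring R] [Ring S] [Algebra R S] {a b : S} {r : R}

lemma mul_resolvent_eq (ha : r ∈ resolventSet R a) :
    a * resolvent a r = r • resolvent a r - 1 := by
  have cancel : (algebraMap R S r - a) * resolvent a r = 1 := Ring.mul_inverse_cancel _ ha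
  rw [← cancel, sub_mul, Algebra.smul_def, sub_sub_cancel]

lemma mul_resolvent_sub_mul_resolvent (ha : r ∈ resolventSet R a) (hb : r ∈ resolventSet R b) :
    a * resolvent a r - b * resolvent b r = r • (resolvent a r * (a - b) * resolvent b r) := by
  rw [mul_resolvent_eq ha, mul_resolvent_eq hb, sub_sub_sub_cancel_right, ← smul_sub,
    spectrum.resolvent_sub_resolvent ha hb]

end Resolvent

lemma norm_mul_resolvent_sub_mul_resolvent_le {𝕜 S : Type*} [NormedField 𝕜] [SeminormedRing S]
    [NormedAlgebra 𝕜 S] {a b : S} {z : 𝕜}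
    (ha : z ∈ resolventSet 𝕜 a) (hb : z ∈ resolventSet 𝕜 b) :
    ‖a * resolvent a z - b * resolvent b z‖ ≤
      ‖z‖ * (‖resolvent a z‖ * ‖a - b‖ * ‖resolvent b z‖) := by
  rw [mul_resolvent_sub_mul_resolvent ha hb, norm_smul]
  gcongr
  exact norm_mul₃_le

lemma continuousOn_resolvent {𝕜 S : Type*} [NormedField 𝕜] [NormedRing S]
    [NormedAlgebra 𝕜 S] [HasSummableGeomSeries S] (a : S) :
    ContinuousOn (resolvent a) (resolventSet 𝕜 a) := by
  intro _ hz
  have sub_continuous : Continuous fun w : 𝕜 => algebraMap 𝕜 S w - a :=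
    (continuous_algebraMap 𝕜 S).sub continuous_const
  exact ((NormedRing.inverse_continuousAt hz.unit).comp_of_eq sub_continuous.continuousAt
    hz.unit_spec.symm).continuousWithinAt

namespace MemV

variable {X : Type*} [NormedAddCommGroup X] [NormedSpace ℂ X] {b M N : ℝ} {A B : X →L[ℂ] X}

lemma norm_mul_resolvent_sub_le (hA : MemV b M A) (hB : MemV b N B) {t : ℝ} (ht : t ∈ Ioc 0 b) :
    ‖A * resolvent A (t : ℂ) - B * resolvent B (t : ℂ)‖ ≤ M * N * ‖A - B‖ * (1 / t) := by
  obtain ⟨memA, boundA⟩ := hA t ht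
  obtain ⟨memB, boundB⟩ := hB t ht
  have t_pos : 0 < t := ht.1
  have M_div_nonneg : 0 ≤ M / t := (norm_nonneg _).trans boundA
  calc ‖A * resolvent A (t : ℂ) - B * resolvent B (t : ℂ)‖
      ≤ ‖(t : ℂ)‖ * (‖resolvent A (t : ℂ)‖ * ‖A - B‖ * ‖resolvent B (t : ℂ)‖) :=
        norm_mul_resolvent_sub_mul_resolvent_le memA memB
    _ ≤ t * (M / t * ‖A - B‖ * (N / t)) := by
        rw [Complex.norm_of_nonneg t_pos.le]
        gcongr
    _ = M * N * ‖A - B‖ * (1 / t) := by field_simp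

variable [CompleteSpace X] {τ : Measure ℝ}

lemma continuousOn_resolvent_ofReal (hA : MemV b M A) :
    ContinuousOn (fun t : ℝ => resolvent A (t : ℂ)) (Ioc 0 b) :=
  (continuousOn_resolvent A).comp Complex.continuous_ofReal.continuousOn fun t ht => (hA t ht).1

lemma integrableOn_mul_resolvent (hA : MemV b M A)
    (hτ : IntegrableOn (fun t : ℝ => 1 / t) (Ioc 0 b) τ) :
    IntegrableOn (fun t : ℝ => A * resolvent A (t : ℂ)) (Ioc 0 b) τ := by
  have resolvent_integrable : IntegrableOn (fun t : ℝ => resolvent A (t : ℂ)) (Ioc 0 b) τ := by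
    refine (hτ.const_mul M).mono'
      (hA.continuousOn_resolvent_ofReal.aestronglyMeasurable measurableSet_Ioc) ?_
    filter_upwards [ae_restrict_mem measurableSet_Ioc] with t ht
    exact (hA t ht).2.trans_eq (div_eq_mul_one_div M t)
  exact resolvent_integrable.const_mul A

lemma norm_fOp_sub_le (hA : MemV b M A) (hB : MemV b N B)
    (hτ : IntegrableOn (fun t : ℝ => 1 / t) (Ioc 0 b) τ) :
    ‖fOp τ b A - fOp τ b B‖ ≤ M * N * ‖A - B‖ * ∫ t in Ioc 0 b, 1 / t ∂τ := by
  rw [fOp, fOp,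
    ← integral_sub (hA.integrableOn_mul_resolvent hτ) (hB.integrableOn_mul_resolvent hτ),
    ← integral_const_mul]
  refine norm_integral_le_of_norm_le (hτ.const_mul _) ?_
  filter_upwards [ae_restrict_mem measurableSet_Ioc] with t ht
  exact hA.norm_mul_resolvent_sub_le hB ht

end MemV

theorem fOp_stability_general {X ι : Type*} [NormedAddCommGroup X] [NormedSpace ℂ X]
    [CompleteSpace X] {b : ℝ} {τ : Measure ℝ}
    (hτ : IntegrableOn (fun t : ℝ => 1 / t) (Ioc 0 b) τ)
    {M N : ℝ} {l : Filter ι} {A B : ι → X →L[ℂ] X}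
    (hA : ∀ᶠ i in l, MemV b M (A i)) (hB : ∀ᶠ i in l, MemV b N (B i))
    (hconv : Tendsto (fun i => ‖A i - B i‖) l (nhds 0)) :
    Tendsto (fun i => ‖fOp τ b (A i) - fOp τ b (B i)‖) l (nhds 0) := by
  have lipschitz_bound : ∀ᶠ i in l, ‖fOp τ b (A i) - fOp τ b (B i)‖ ≤
      M * N * ‖A i - B i‖ * ∫ t in Ioc 0 b, 1 / t ∂τ := by
    filter_upwards [hA, hB] with i hAi hBi
    exact hAi.norm_fOp_sub_le hBi hτ
  refine squeeze_zero' (.of_forall fun _ => norm_nonneg _) lipschitz_bound ?_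
  simpa using (hconv.const_mul (M * N)).mul_const (∫ t in Ioc 0 b, 1 / t ∂τ)

/-- Corollary 3 (stability): if `A_n, B_n ∈ V_{(0,b]}(X)` with constants bounded by `c` and
`‖A_n − B_n‖ → 0`, then `‖f(A_n) − f(B_n)‖ → 0`. -/
theorem fOp_stability {X : Type*} [NormedAddCommGroup X] [NormedSpace ℂ X]
    [CompleteSpace X] (b : ℝ) (hb : 0 < b) (τ : Measure ℝ) [IsFiniteMeasure τ]
    (hτ : IntegrableOn (fun t : ℝ => 1 / t) (Ioc 0 b) τ)
    (c : ℝ) (hc : 0 < c) (A B : ℕ → X →L[ℂ] X)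
    (hA : ∀ n, MemV b c (A n)) (hB : ∀ n, MemV b c (B n))
    (hconv : Tendsto (fun n => ‖A n - B n‖) atTop (nhds 0)) :
    Tendsto (fun n => ‖fOp τ b (A n) - fOp τ b (B n)‖) atTop (nhds 0) :=
  fOp_stability_general hτ (.of_forall hA) (.of_forall hB) hconv
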